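/- For every 0 < ε < 1 there exists a constant C > 0 such that the following holds. Let λ, γ ∈ (0,1), and let G be a (λ,γ)-supersaturated graph on N vertices with average degree D > 0. Let p ∈ (0,1] satisfy p ≥ C·(λγD)^{−1}·ln²(e/λ), and let H = G[V_p] be the subgraph of G induced on the binomial random subset V_p of the vertex set. Then P( α(H) ≥ (1+ε)·λ·p·N ) ≤ exp( −ε²·p·λ·N/24 ). -/

import Mathlib

open MeasureTheory Filter Finset

noncomputable section

/-- The binomial random subset measure on `V → Bool`: each coordinate is `true`
independently with probability `p`. -/
def bernMeasure (V : Type*) [Fintype V] (p : ℝ) : Measure (V → Bool) :=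
  Measure.pi fun _ => (PMF.bernoulli (min (Real.toNNReal p) 1) (min_le_right _ _)).toMeasure

/-- Vertices of the Kneser graph: `k`-element subsets of `[n]`. -/
abbrev KVert (n k : ℕ) := {A : Finset (Fin n) // A.card = k}

/-- The Kneser graph `K(n,k)`. -/
def kneser (n k : ℕ) : SimpleGraph (KVert n k) where
  Adj A B := A ≠ B ∧ Disjoint A.1 B.1
  symm := ⟨fun A B h => ⟨h.1.symm, h.2.symm⟩⟩
  loopless := ⟨fun A h => h.1 rfl⟩

/-- Total number of edges of a graph. -/
def eTotal {V : Type*} [Fintype V] (G : SimpleGraph V) : ℕ := Nat.card G.edgeSet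

/-- Number of edges of `G` with both endpoints in `S`. -/
def eCount {V : Type*} [Fintype V] (G : SimpleGraph V) (S : Finset V) : ℕ :=
  Nat.card (G.induce (S : Set V)).edgeSet

/-- `S` is an independent set of `G`. -/
def IsIndep {V : Type*} (G : SimpleGraph V) (S : Finset V) : Prop :=
  ∀ a ∈ S, ∀ b ∈ S, ¬ G.Adj a b

/-- Independence number of the subgraph of `G` induced on `{v | ω v = true}`. -/
def alphaSub {V : Type*} [Fintype V] (G : SimpleGraph V) (ω : V → Bool) : ℕ :=
  sSup {m | ∃ S : Finset V, (∀ v ∈ S, ω v = true) ∧ IsIndep G S ∧ S.card = m}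

/-- The size of a largest intersecting subfamily of the random hypergraph
determined by `ω`. -/
def maxIntersecting (n k : ℕ) (ω : KVert n k → Bool) : ℕ :=
  sSup {m | ∃ F : Finset (KVert n k), (∀ A ∈ F, ω A = true) ∧
    (∀ A ∈ F, ∀ B ∈ F, (A.1 ∩ B.1).Nonempty) ∧ F.card = m}

/-- `(λ,γ)`-supersaturation. -/
def Supersaturated {V : Type*} [Fintype V] (G : SimpleGraph V) (lam gam : ℝ) : Prop :=
  ∀ S : Finset V, lam * Fintype.card V ≤ S.card →
    gam * ((S.card : ℝ) / Fintype.card V) ^ 2 * eTotal G ≤ eCount G S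

/-- `(λ,B)`-stability with respect to `(ε,δ)`. -/
def StableWrt {V : Type*} [Fintype V] [DecidableEq V] (G : SimpleGraph V) (lam : ℝ)
    (B : Set (Finset V)) (eps del : ℝ) : Prop :=
  ∀ S : Finset V, (1 - del) * lam * Fintype.card V ≤ S.card →
    (del * ((S.card : ℝ) / Fintype.card V) ^ 2 * eTotal G ≤ eCount G S) ∨
    ∃ b ∈ B, ((S \ b).card : ℝ) ≤ eps * lam * Fintype.card V

end

/-!
Bound the moment generating function of `α(G[A ∩ V_p])` by induction on `A`, in the spirit of the
graph container algorithm. As long as `A` has more than `λN` vertices, supersaturation provides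
`v ∈ A` adjacent to at least a `β`-fraction of `A`, where `β = γD/N`. A largest independent set
either avoids `v`, or uses `v` and lives otherwise on its non-neighbours in `A`. The second event
requires `v ∈ V_p`, which is independent of the rest, and it shrinks `A` by a factor `1 - β`; hence
it occurs at most `q ≈ log(1/λ)/β` times before `A` has at most `λN` vertices, and from then on the
independence number is bounded by a binomial variable of mean at most `λpN`. The lower bound on `p`
makes the cost of the `q` choices a small multiple of `ε²λpN`, so that Chernoff's bound applies.
-/

open ProbabilityTheory Real

section BinomialSubset

variable {V : Type*} [Fintype V] {p : ℝ}

instance : IsProbabilityMeasure (bernMeasure V p) := by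
  unfold bernMeasure
  infer_instance

lemma integral_eval_bernMeasure (hp0 : 0 ≤ p) (hp1 : p ≤ 1) (v : V) (f : Bool → ℝ) :
    ∫ ω, f (ω v) ∂bernMeasure V p = p * f true + (1 - p) * f false := by
  have hp : p.toNNReal ≤ 1 := Real.toNNReal_le_one.2 hp1
  rw [bernMeasure, integral_comp_eval (μ := fun _ : V ↦ PMF.toMeasure _) .of_discrete,
    PMF.integral_eq_sum]
  simp [PMF.bernoulli_apply, hp0, hp]

variable (V p) in
lemma iIndepFun_eval_bernMeasure :
    iIndepFun (fun (v : V) (ω : V → Bool) ↦ ω v) (bernMeasure V p) :=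
  iIndepFun_pi (X := fun _ b ↦ b) fun _ ↦ aemeasurable_id

lemma integral_eval_mul_of_dependsOn {f : (V → Bool) → ℝ} {s : Finset V} (hf : DependsOn f s)
    {v : V} (hv : v ∉ s) (g : Bool → ℝ) :
    ∫ ω, g (ω v) * f ω ∂bernMeasure V p =
      (∫ ω, g (ω v) ∂bernMeasure V p) * ∫ ω, f ω ∂bernMeasure V p := by
  obtain ⟨f', rfl⟩ := dependsOn_iff_exists_comp.1 hf
  have hindep := (iIndepFun_eval_bernMeasure V p).indepFun_finset {v} s
    (Finset.disjoint_singleton_left.2 hv) fun _ ↦ .of_discrete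
  exact (hindep.comp (φ := fun b ↦ g (b ⟨v, mem_singleton_self v⟩)) (ψ := f')
    .of_discrete .of_discrete).integral_fun_mul_eq_mul_integral .of_discrete .of_discrete

lemma mgf_card_filter_bernMeasure (hp0 : 0 ≤ p) (hp1 : p ≤ 1) (A : Finset V) (t : ℝ) :
    mgf (fun ω ↦ (#{v ∈ A | ω v = true} : ℝ)) (bernMeasure V p) t =
      (1 + p * (exp t - 1)) ^ #A := by
  let X (v : V) (ω : V → Bool) : ℝ := if ω v = true then 1 else 0
  have hindep : iIndepFun X (bernMeasure V p) :=
    (iIndepFun_eval_bernMeasure V p).comp (fun _ b ↦ if b = true then 1 else 0) fun _ ↦ .of_discrete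
  have hX (v : V) : mgf (X v) (bernMeasure V p) t = 1 + p * (exp t - 1) := by
    rw [mgf, integral_eval_bernMeasure hp0 hp1 v fun b ↦ exp (t * if b = true then 1 else 0)]
    simp only [if_true, Bool.false_eq_true, if_false, mul_one, mul_zero, exp_zero]
    ring
  calc mgf (fun ω ↦ (#{v ∈ A | ω v = true} : ℝ)) (bernMeasure V p) t
      = mgf (∑ v ∈ A, X v) (bernMeasure V p) t := by
        congr 1 with ω
        simp [X]
    _ = (1 + p * (exp t - 1)) ^ #A := by
        rw [hindep.mgf_sum (fun _ ↦ .of_discrete), prod_congr rfl fun v _ ↦ hX v, prod_const]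

end BinomialSubset

section IndependenceNumber

lemma IsIndep.mono {V : Type*} {G : SimpleGraph V} {S T : Finset V} (hT : IsIndep G T)
    (hST : S ⊆ T) : IsIndep G S :=
  fun a ha b hb ↦ hT a (hST ha) b (hST hb)

lemma bddAbove_card_isIndep {V : Type*} [Finite V] (G : SimpleGraph V) (ω : V → Bool) :
    BddAbove {m | ∃ S : Finset V, (∀ v ∈ S, ω v = true) ∧ IsIndep G S ∧ #S = m} :=
  (Set.finite_range (card : Finset V → ℕ)).bddAbove.mono <| by
    rintro _ ⟨S, -, -, rfl⟩
    exact Set.mem_range_self S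

variable {V : Type*} [Fintype V] {G : SimpleGraph V} {ω : V → Bool}

lemma IsIndep.card_le_alphaSub {S : Finset V} (hS : IsIndep G S) (hω : ∀ v ∈ S, ω v = true) :
    #S ≤ alphaSub G ω :=
  le_csSup (bddAbove_card_isIndep G ω) ⟨S, hω, hS, rfl⟩

lemma exists_isIndep_card_eq_alphaSub (G : SimpleGraph V) (ω : V → Bool) :
    ∃ S : Finset V, (∀ v ∈ S, ω v = true) ∧ IsIndep G S ∧ #S = alphaSub G ω := by
  have hempty : IsIndep G ∅ := by simp [IsIndep]
  exact Nat.sSup_mem (by exact ⟨0, ∅, by simp, hempty, card_empty⟩) (bddAbove_card_isIndep G ω)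

variable [DecidableEq V]

/-- The independence number of the subgraph induced on the part of the random set `{v | ω v}` that
lies in `A`, encoded by switching off the vertices of `ω` outside `A`. -/
noncomputable def alphaOn (G : SimpleGraph V) (A : Finset V) (ω : V → Bool) : ℕ :=
  alphaSub G fun v ↦ decide (v ∈ A) && ω v

lemma alphaOn_univ (G : SimpleGraph V) (ω : V → Bool) : alphaOn G univ ω = alphaSub G ω := by
  simp [alphaOn]

lemma dependsOn_alphaOn (G : SimpleGraph V) (A : Finset V) : DependsOn (alphaOn G A) A := by
  intro ω ω' h
  refine congrArg (alphaSub G) (funext fun v ↦ ?_)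
  by_cases hv : v ∈ A
  · rw [h v hv]
  · simp [hv]

lemma IsIndep.card_le_alphaOn {A S : Finset V} (hS : IsIndep G S) (hSA : S ⊆ A)
    (hω : ∀ v ∈ S, ω v = true) : #S ≤ alphaOn G A ω :=
  hS.card_le_alphaSub fun v hv ↦ by simp [hSA hv, hω v hv]

lemma exists_isIndep_card_eq_alphaOn (G : SimpleGraph V) (A : Finset V) (ω : V → Bool) :
    ∃ S ⊆ A, (∀ v ∈ S, ω v = true) ∧ IsIndep G S ∧ #S = alphaOn G A ω := by
  obtain ⟨S, hSω, hS, hcard⟩ :=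
    exists_isIndep_card_eq_alphaSub G fun v ↦ decide (v ∈ A) && ω v
  simp only [Bool.and_eq_true, decide_eq_true_eq] at hSω
  exact ⟨S, fun v hv ↦ (hSω v hv).1, fun v hv ↦ (hSω v hv).2, hS, hcard⟩

lemma alphaOn_le_card_filter (G : SimpleGraph V) (A : Finset V) (ω : V → Bool) :
    alphaOn G A ω ≤ #{v ∈ A | ω v = true} := by
  obtain ⟨S, hSA, hSω, -, hcard⟩ := exists_isIndep_card_eq_alphaOn G A ω
  exact hcard ▸ card_le_card fun v hv ↦ mem_filter.2 ⟨hSA hv, hSω v hv⟩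

lemma alphaOn_le_erase_or_le_succ [DecidableRel G.Adj] (A : Finset V) (ω : V → Bool) (v : V) :
    alphaOn G A ω ≤ alphaOn G (A.erase v) ω ∨
      ω v = true ∧ alphaOn G A ω ≤ alphaOn G {u ∈ A | Gᶜ.Adj v u} ω + 1 := by
  obtain ⟨S, hSA, hSω, hS, hcard⟩ := exists_isIndep_card_eq_alphaOn G A ω
  rw [← hcard]
  by_cases hv : v ∈ S
  · have hsub : S.erase v ⊆ {u ∈ A | Gᶜ.Adj v u} := fun u hu ↦ by
      obtain ⟨huv, huS⟩ := mem_erase.1 hu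
      exact mem_filter.2 ⟨hSA huS, huv.symm, hS v hv u huS⟩
    have hle := (hS.mono (erase_subset v S)).card_le_alphaOn hsub
      fun u hu ↦ hSω u (mem_of_mem_erase hu)
    exact .inr ⟨hSω v hv, card_erase_add_one hv ▸ Nat.succ_le_succ hle⟩
  · exact .inl (hS.card_le_alphaOn (subset_erase.2 ⟨hSA, hv⟩) hSω)

end IndependenceNumber

section MomentGeneratingFunction

lemma one_add_pow_le_exp {x : ℝ} (hx : 0 ≤ x) (n : ℕ) : (1 + x) ^ n ≤ exp (x * n) := by
  rw [mul_comm, exp_nat_mul, add_comm]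
  gcongr
  exact add_one_le_exp x

variable {V : Type*} [Fintype V] [DecidableEq V] {G : SimpleGraph V} {p t : ℝ}

lemma mgf_alphaOn_le_one_add_pow (G : SimpleGraph V) (hp0 : 0 ≤ p) (hp1 : p ≤ 1) (ht : 0 ≤ t)
    (A : Finset V) :
    mgf (fun ω ↦ (alphaOn G A ω : ℝ)) (bernMeasure V p) t ≤ (1 + p * (exp t - 1)) ^ #A := by
  rw [← mgf_card_filter_bernMeasure hp0 hp1]
  exact mgf_mono_of_nonneg
    (.of_forall fun ω ↦ Nat.cast_le.2 (alphaOn_le_card_filter G A ω)) ht .of_finite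

lemma mgf_alphaOn_le_exp (G : SimpleGraph V) {K : ℝ} (hp0 : 0 ≤ p) (hp1 : p ≤ 1) (ht : 0 ≤ t)
    {A : Finset V} (hA : #A ≤ K) :
    mgf (fun ω ↦ (alphaOn G A ω : ℝ)) (bernMeasure V p) t ≤ exp (p * (exp t - 1) * K) := by
  have hx : 0 ≤ p * (exp t - 1) := mul_nonneg hp0 (sub_nonneg.2 (one_le_exp ht))
  calc mgf (fun ω ↦ (alphaOn G A ω : ℝ)) (bernMeasure V p) t
      ≤ (1 + p * (exp t - 1)) ^ #A := mgf_alphaOn_le_one_add_pow G hp0 hp1 ht A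
    _ ≤ exp (p * (exp t - 1) * #A) := one_add_pow_le_exp hx _
    _ ≤ exp (p * (exp t - 1) * K) := by gcongr

variable [DecidableRel G.Adj]

lemma exp_alphaOn_le (ht : 0 ≤ t) (A : Finset V) (ω : V → Bool) (v : V) :
    exp (t * alphaOn G A ω) ≤ exp (t * alphaOn G (A.erase v) ω) +
      (if ω v = true then exp t else 0) * exp (t * alphaOn G {u ∈ A | Gᶜ.Adj v u} ω) := by
  rcases alphaOn_le_erase_or_le_succ (G := G) A ω v with hle | ⟨hv, hle⟩
  · refine le_add_of_le_of_nonneg (by gcongr) (mul_nonneg ?_ (exp_nonneg _))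
    split_ifs <;> positivity
  · refine le_add_of_nonneg_of_le (exp_nonneg _) ?_
    rw [if_pos hv, ← exp_add, exp_le_exp, ← mul_one_add, add_comm 1]
    exact mul_le_mul_of_nonneg_left (mod_cast hle) ht

lemma mgf_alphaOn_le_add (hp0 : 0 ≤ p) (hp1 : p ≤ 1) (ht : 0 ≤ t) (A : Finset V) (v : V) :
    mgf (fun ω ↦ (alphaOn G A ω : ℝ)) (bernMeasure V p) t ≤
      mgf (fun ω ↦ (alphaOn G (A.erase v) ω : ℝ)) (bernMeasure V p) t +
        p * exp t * mgf (fun ω ↦ (alphaOn G {u ∈ A | Gᶜ.Adj v u} ω : ℝ)) (bernMeasure V p) t := by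
  set B : Finset V := {u ∈ A | Gᶜ.Adj v u}
  have hdep : DependsOn (fun ω ↦ exp (t * alphaOn G B ω)) B := fun ω ω' h ↦ by
    simp only [dependsOn_alphaOn G B h]
  have hv : v ∉ B := by simp [B]
  calc mgf (fun ω ↦ (alphaOn G A ω : ℝ)) (bernMeasure V p) t
      ≤ ∫ ω, (exp (t * alphaOn G (A.erase v) ω) +
          (if ω v = true then exp t else 0) * exp (t * alphaOn G B ω)) ∂bernMeasure V p :=
        integral_mono .of_finite .of_finite fun ω ↦ exp_alphaOn_le ht A ω v
    _ = _ := by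
        rw [integral_add .of_finite .of_finite,
          integral_eval_mul_of_dependsOn hdep hv fun b ↦ if b = true then exp t else 0,
          integral_eval_bernMeasure hp0 hp1 v fun b ↦ if b = true then exp t else 0]
        simp [mgf]

end MomentGeneratingFunction

section LocallyDense

variable {V : Type*} {G : SimpleGraph V} [DecidableRel G.Adj] {K β p t y : ℝ} {q : ℕ}

/-- Every set of more than `K` vertices contains a vertex adjacent to at least a `β`-fraction of
it. This is the form in which supersaturation enters the moment bounds. -/
def LocallyDense (G : SimpleGraph V) [DecidableRel G.Adj] (K β : ℝ) : Prop :=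
  ∀ A : Finset V, K < #A → ∃ v ∈ A, β * #A ≤ #{u ∈ A | G.Adj v u}

lemma LocallyDense.le_one [Fintype V] (hG : LocallyDense G K β) (hK : K < Fintype.card V) :
    β ≤ 1 := by
  obtain ⟨v, hvuniv, hv⟩ := hG univ hK
  have hcard : (0 : ℝ) < #(univ : Finset V) := mod_cast card_pos.2 ⟨v, hvuniv⟩
  refine le_of_mul_le_mul_right (hv.trans ?_) hcard
  rw [one_mul]
  exact mod_cast card_filter_le _ _

variable [DecidableEq V]

lemma filter_compl_adj_subset_erase (A : Finset V) (v : V) :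
    ({u ∈ A | Gᶜ.Adj v u} : Finset V) ⊆ A.erase v := fun u hu ↦ by
  obtain ⟨huA, hvu⟩ := mem_filter.1 hu
  exact mem_erase.2 ⟨hvu.ne', huA⟩

lemma card_filter_compl_adj_le {A : Finset V} {v : V} (hv : β * #A ≤ #{u ∈ A | G.Adj v u}) :
    (#{u ∈ A | Gᶜ.Adj v u} : ℝ) ≤ (1 - β) * #A := by
  have hsub : ({u ∈ A | Gᶜ.Adj v u} : Finset V) ⊆ {u ∈ A | ¬ G.Adj v u} :=
    monotone_filter_right A fun u _ hu ↦ hu.2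
  have hle : (#{u ∈ A | Gᶜ.Adj v u} : ℝ) ≤ #{u ∈ A | ¬ G.Adj v u} := mod_cast card_le_card hsub
  have hadd : (#{u ∈ A | G.Adj v u} : ℝ) + #{u ∈ A | ¬ G.Adj v u} = #A :=
    mod_cast card_filter_add_card_filter_not (s := A) (G.Adj v)
  linarith

variable [Fintype V]

-- The free parameter `y` avoids a sum over the sets of selected vertices: each of the at most `q`
-- selections is charged `y⁻¹`, so that every vertex offered contributes only `1 + p * exp t * y`.
lemma LocallyDense.mgf_alphaOn_le (hG : LocallyDense G K β) (hβ : β ≤ 1) (hp0 : 0 ≤ p)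
    (hp1 : p ≤ 1) (ht : 0 ≤ t) (hy0 : 0 < y) (hy1 : y ≤ 1) (A : Finset V)
    (hq : (1 - β) ^ q * #A ≤ K) :
    mgf (fun ω ↦ (alphaOn G A ω : ℝ)) (bernMeasure V p) t ≤
      exp (p * (exp t - 1) * K) * y⁻¹ ^ q * (1 + p * exp t * y) ^ #A := by
  have hz : 1 ≤ 1 + p * exp t * y := le_add_of_nonneg_right (by positivity)
  induction A using Finset.strongInduction generalizing q with | H A ih => ?_
  rcases le_or_gt (#A : ℝ) K with hAK | hAK
  · refine (mgf_alphaOn_le_exp G hp0 hp1 ht hAK).trans ?_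
    rw [mul_assoc (exp _)]
    exact le_mul_of_one_le_right (exp_nonneg _)
      (one_le_mul_of_one_le_of_one_le (one_le_pow₀ (one_le_inv₀ hy0 |>.2 hy1)) (one_le_pow₀ hz))
  obtain ⟨v, hvA, hdeg⟩ := hG A hAK
  obtain _ | q := q
  · simp only [pow_zero, one_mul] at hq
    exact absurd hq hAK.not_ge
  set B : Finset V := {u ∈ A | Gᶜ.Adj v u}
  have hBA : B ⊆ A.erase v := filter_compl_adj_subset_erase A v
  have : 0 ≤ 1 - β := sub_nonneg.2 hβ
  have hdiscard := ih _ (erase_ssubset hvA) (q := q + 1) <| hq.trans' <| by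
    gcongr
    exact erase_subset v A
  have hselect := ih B (hBA.trans_ssubset (erase_ssubset hvA)) (q := q) <| hq.trans' <| by
    rw [pow_succ, mul_assoc]
    gcongr
    exact card_filter_compl_adj_le hdeg
  calc mgf (fun ω ↦ (alphaOn G A ω : ℝ)) (bernMeasure V p) t
      ≤ exp (p * (exp t - 1) * K) * y⁻¹ ^ (q + 1) * (1 + p * exp t * y) ^ #(A.erase v) +
          p * exp t *
            (exp (p * (exp t - 1) * K) * y⁻¹ ^ q * (1 + p * exp t * y) ^ #(A.erase v)) := by
        refine (mgf_alphaOn_le_add hp0 hp1 ht A v).trans ?_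
        gcongr
        exact hselect.trans (by gcongr)
    _ = exp (p * (exp t - 1) * K) * y⁻¹ ^ (q + 1) * (1 + p * exp t * y) ^ #A := by
        rw [← card_erase_add_one hvA, pow_succ (1 + p * exp t * y), pow_succ y⁻¹]
        field_simp

end LocallyDense

section Supersaturation

variable {V : Type*} [Fintype V] {G : SimpleGraph V} [DecidableRel G.Adj]

lemma sum_card_filter_adj_eq_two_mul_eCount (A : Finset V) :
    ∑ v ∈ A, #{u ∈ A | G.Adj v u} = 2 * eCount G A := by
  classical
  have hdeg (v : (A : Set V)) :
      (G.induce (A : Set V)).degree v = #{u ∈ A | G.Adj v u} := by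
    rw [← SimpleGraph.card_neighborFinset_eq_degree, SimpleGraph.neighborFinset_eq_filter,
      card_filter, card_filter, ← sum_coe_sort A]
    rfl
  have hhandshake := (G.induce (A : Set V)).sum_degrees_eq_twice_card_edges
  simp only [hdeg] at hhandshake
  rw [eCount, Nat.card_eq_fintype_card, ← SimpleGraph.edgeFinset_card, ← hhandshake,
    ← sum_coe_sort A]
  rfl

lemma Supersaturated.locallyDense {lam gam : ℝ} (hG : Supersaturated G lam gam)
    (hlam : 0 ≤ lam) :
    LocallyDense G (lam * Fintype.card V)
      (gam * (2 * eTotal G / Fintype.card V) / Fintype.card V) := by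
  intro A hA
  have hApos : (0 : ℝ) < #A := hA.trans_le' (by positivity)
  have hAne : A.Nonempty := card_pos.1 (mod_cast hApos)
  have hN : (0 : ℝ) < Fintype.card V := hApos.trans_le (mod_cast card_le_univ A)
  refine exists_le_of_sum_le hAne ?_
  calc ∑ _ ∈ A, gam * (2 * eTotal G / Fintype.card V) / Fintype.card V * (#A : ℝ)
      = 2 * (gam * ((#A : ℝ) / Fintype.card V) ^ 2 * eTotal G) := by
        rw [sum_const, nsmul_eq_mul]
        field_simp
    _ ≤ 2 * eCount G A := by
        gcongr
        exact hG A hA.le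
    _ = ∑ v ∈ A, (#{u ∈ A | G.Adj v u} : ℝ) :=
        mod_cast (sum_card_filter_adj_eq_two_mul_eCount A).symm

end Supersaturation

section TailBound

variable {K β lam η ε p t y X : ℝ} {q : ℕ}

lemma log_exp_one_div (hlam : lam ≠ 0) : log (exp 1 / lam) = 1 + log lam⁻¹ := by
  rw [log_div (exp_ne_zero 1) hlam, log_exp, log_inv, sub_eq_add_neg]

lemma exists_one_sub_pow_le (hβ0 : 0 < β) (hβ1 : β ≤ 1) (hlam0 : 0 < lam) (hlam1 : lam ≤ 1) :
    ∃ q : ℕ, (1 - β) ^ q ≤ lam ∧ q * β ≤ log (exp 1 / lam) := by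
  have hlog : 0 ≤ log lam⁻¹ := log_nonneg (one_le_inv₀ hlam0 |>.2 hlam1)
  refine ⟨⌈log lam⁻¹ / β⌉₊, ?_, ?_⟩
  · calc (1 - β) ^ ⌈log lam⁻¹ / β⌉₊
        ≤ exp (-β) ^ ⌈log lam⁻¹ / β⌉₊ :=
          pow_le_pow_left₀ (sub_nonneg.2 hβ1) (one_sub_le_exp_neg β) _
      _ = exp (-(⌈log lam⁻¹ / β⌉₊ * β)) := by rw [← exp_nat_mul, mul_neg]
      _ ≤ exp (-log lam⁻¹) := by
          gcongr
          exact (div_le_iff₀ hβ0).1 (Nat.le_ceil _)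
      _ = lam := by rw [log_inv, neg_neg, exp_log hlam0]
  · calc ⌈log lam⁻¹ / β⌉₊ * β
        ≤ (log lam⁻¹ / β + 1) * β := by
          gcongr
          exact (Nat.ceil_lt_add_one (by positivity)).le
      _ = β + log lam⁻¹ := by field_simp; ring
      _ ≤ log (exp 1 / lam) := by
          rw [log_exp_one_div hlam0.ne']
          gcongr

lemma mul_log_inv_mul_le (hβ0 : 0 < β) (hlam0 : 0 < lam) (hlam1 : lam ≤ 1) (hη0 : 0 < η)
    (hη1 : η ≤ 1) (hq : q * β ≤ log (exp 1 / lam))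
    (hX : (1 + log η⁻¹) * log (exp 1 / lam) ^ 2 ≤ η * β * X) :
    q * log (lam * η)⁻¹ ≤ η * X := by
  have hlogη : 0 ≤ log η⁻¹ := log_nonneg (one_le_inv₀ hη0 |>.2 hη1)
  have hloglam : 0 ≤ log lam⁻¹ := log_nonneg (one_le_inv₀ hlam0 |>.2 hlam1)
  have hlog : log (lam * η)⁻¹ = log lam⁻¹ + log η⁻¹ := by
    rw [mul_inv, log_mul (by positivity) (by positivity)]
  rw [log_exp_one_div hlam0.ne'] at hq hX
  refine le_of_mul_le_mul_left ?_ hβ0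
  calc β * (q * log (lam * η)⁻¹)
      = q * β * (log lam⁻¹ + log η⁻¹) := by rw [hlog]; ring
    _ ≤ (1 + log lam⁻¹) * ((1 + log η⁻¹) * (1 + log lam⁻¹)) := by
        gcongr
        linarith [mul_nonneg hlogη hloglam]
    _ ≤ β * (η * X) := by linarith

-- The exponential tilt `ε / 2` gains about `ε ^ 2 / 4` over a variable with Poisson tails;
-- the two costs of the selection take at most `3 * (ε ^ 2 / 16)` of it.
lemma chernoff_exponent_le (hε0 : 0 ≤ ε) (hε1 : ε ≤ 1) :
    -(ε / 2) * (1 + ε) + (exp (ε / 2) - 1 + ε ^ 2 / 16 + exp (ε / 2) * (ε ^ 2 / 16)) ≤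
      -ε ^ 2 / 24 := by
  have hexp : exp (ε / 2) ≤ 1 + ε / 2 + (ε / 2) ^ 2 := by
    have habs : |ε / 2| ≤ 1 := abs_le.2 ⟨by linarith, by linarith⟩
    linarith [(abs_le.1 (abs_exp_sub_one_sub_id_le habs)).2]
  have hexp_two : exp (ε / 2) ≤ 2 := by nlinarith
  nlinarith [mul_le_mul_of_nonneg_right hexp_two (sq_nonneg ε)]

variable {V : Type*} [Fintype V] {G : SimpleGraph V} [DecidableRel G.Adj]

lemma LocallyDense.mgf_alphaSub_le_exp (hG : LocallyDense G K β) (hβ : β ≤ 1) (hp0 : 0 ≤ p)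
    (hp1 : p ≤ 1) (ht : 0 ≤ t) (hy0 : 0 < y) (hy1 : y ≤ 1)
    (hq : (1 - β) ^ q * Fintype.card V ≤ K) :
    mgf (fun ω ↦ (alphaSub G ω : ℝ)) (bernMeasure V p) t ≤
      exp (p * (exp t - 1) * K + q * log y⁻¹ + p * exp t * y * Fintype.card V) := by
  classical
  have hmgf := hG.mgf_alphaOn_le hβ hp0 hp1 ht hy0 hy1 univ hq
  simp only [alphaOn_univ, card_univ] at hmgf
  refine hmgf.trans ?_
  rw [exp_add, exp_add, exp_nat_mul, exp_log (inv_pos.2 hy0)]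
  gcongr
  exact one_add_pow_le_exp (by positivity) _

variable [Nonempty V]

lemma LocallyDense.mgf_alphaSub_le_exp_mul (hG : LocallyDense G (lam * Fintype.card V) β)
    (hβ : 0 < β) (hlam0 : 0 < lam) (hlam1 : lam < 1) (hp0 : 0 ≤ p) (hp1 : p ≤ 1) (ht : 0 ≤ t)
    (hη0 : 0 < η) (hη1 : η ≤ 1)
    (hX : (1 + log η⁻¹) * log (exp 1 / lam) ^ 2 ≤ η * β * (lam * p * Fintype.card V)) :
    mgf (fun ω ↦ (alphaSub G ω : ℝ)) (bernMeasure V p) t ≤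
      exp ((exp t - 1 + η + exp t * η) * (lam * p * Fintype.card V)) := by
  have hN : (0 : ℝ) < Fintype.card V := mod_cast Fintype.card_pos
  have hβ1 : β ≤ 1 := hG.le_one (mul_lt_of_lt_one_left hN hlam1)
  obtain ⟨q, hpow, hq⟩ := exists_one_sub_pow_le hβ hβ1 hlam0 hlam1.le
  refine (hG.mgf_alphaSub_le_exp hβ1 hp0 hp1 ht (mul_pos hlam0 hη0)
    (mul_le_one₀ hlam1.le hη0.le hη1) (mul_le_mul_of_nonneg_right hpow hN.le)).trans ?_
  rw [exp_le_exp]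
  linarith [mul_log_inv_mul_le hβ hlam0 hlam1.le hη0 hη1 hq hX]

lemma LocallyDense.measureReal_le_alphaSub_le (hG : LocallyDense G (lam * Fintype.card V) β)
    (hε0 : 0 < ε) (hε1 : ε ≤ 1) (hβ : 0 < β) (hlam0 : 0 < lam) (hlam1 : lam < 1) (hp0 : 0 ≤ p)
    (hp1 : p ≤ 1)
    (hX : (1 + log (ε ^ 2 / 16)⁻¹) * log (exp 1 / lam) ^ 2 ≤
      ε ^ 2 / 16 * β * (lam * p * Fintype.card V)) :
    (bernMeasure V p).real {ω | (1 + ε) * lam * p * Fintype.card V ≤ alphaSub G ω} ≤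
      exp (-(ε ^ 2 * p * lam * Fintype.card V) / 24) := by
  refine (measure_ge_le_exp_mul_mgf _ (half_pos hε0).le .of_finite).trans ?_
  have hmgf := hG.mgf_alphaSub_le_exp_mul hβ hlam0 hlam1 hp0 hp1 (half_pos hε0).le
    (by positivity) (by nlinarith) hX
  refine (mul_le_mul_of_nonneg_left hmgf (exp_nonneg _)).trans ?_
  rw [← exp_add, exp_le_exp]
  have hscale : 0 ≤ lam * p * Fintype.card V := by positivity
  linarith [mul_le_mul_of_nonneg_right (chernoff_exponent_le hε0.le hε1) hscale]

end TailBound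

/-- Transference, dense range: tail bound on the independence
number of the random induced subgraph of a supersaturated graph. -/
theorem transference_dense_range (ε : ℝ) (hε0 : 0 < ε) (hε1 : ε < 1) :
    ∃ C : ℝ, 0 < C ∧
      ∀ (V : Type) (_ : Fintype V) (G : SimpleGraph V) (lam gam : ℝ),
        lam ∈ Set.Ioo (0 : ℝ) 1 → gam ∈ Set.Ioo (0 : ℝ) 1 →
        Supersaturated G lam gam →
        ∀ D : ℝ, D = 2 * (eTotal G : ℝ) / Fintype.card V → 0 < D →
        ∀ p : ℝ, 0 < p → p ≤ 1 →
          C / (lam * gam * D) * (Real.log (Real.exp 1 / lam)) ^ 2 ≤ p →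
          bernMeasure V p
              {ω | (1 + ε) * lam * p * Fintype.card V ≤ (alphaSub G ω : ℝ)} ≤
            ENNReal.ofReal (Real.exp (-(ε ^ 2 * p * lam * Fintype.card V) / 24)) := by
  refine ⟨(1 + log (ε ^ 2 / 16)⁻¹) / (ε ^ 2 / 16), ?_, ?_⟩
  · have hlog : 0 ≤ log (ε ^ 2 / 16)⁻¹ :=
      log_nonneg ((one_le_inv₀ (by positivity)).2 (by nlinarith))
    positivity
  intro V _ G lam gam hlam hgam hG D hD hD0 p hp0 hp1 hp
  classical
  obtain ⟨hlam0, hlam1⟩ := hlam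
  have hN : (0 : ℝ) < Fintype.card V := by
    refine (Nat.cast_nonneg _).lt_of_ne fun h ↦ hD0.ne' ?_
    rw [hD, ← h, div_zero]
  have : Nonempty V := Fintype.card_pos_iff.1 (mod_cast hN)
  have hdense : LocallyDense G (lam * Fintype.card V) (gam * D / Fintype.card V) :=
    hD ▸ hG.locallyDense hlam0.le
  have hgam0 := hgam.1
  rw [← ofReal_measureReal]
  refine ENNReal.ofReal_le_ofReal <|
    hdense.measureReal_le_alphaSub_le hε0 hε1.le (by positivity) hlam0 hlam1 hp0.le hp1 ?_
  field_simp at hp ⊢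
  exact hp
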